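/- arXiv:1710.00916 — 2 statements merged into one kernel-verified Lean document; each statement's English description precedes it below -/
import Mathlib

section
/- Let {w_T}_{T∈F} be an X-inert family of smooth functions of one variable, each compactly supported on [Z,2Z]. Suppose φ is smooth and satisfies |φ^{(j)}(t)| ≪ Y/Z^j for all j ≥ 1 and all t in the support of w_T, and that |φ'(t)| ≫ Y/Z for all t in the support of w_T. Then the conclusion I = ∫_ℝ w_T(t) e^{iφ(t)} dt ≪_A Z·R^{−A} (for every A > 0) holds already under the weaker hypothesis Y/X ≥ R ≥ 1 (rather than Y/X^2 ≥ R ≥ 1). -/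
/-!
The proof is repeated integration by parts. With `p = φ'`, put `g₀ = w` and
`gₙ₊₁ = (gₙ / p)'`. Since `gₙ e^{iφ} = -i (gₙ / p) (e^{iφ})'`, integrating by parts gives
`|∫ gₙ e^{iφ}| = |∫ gₙ₊₁ e^{iφ}|` (`norm_integral_step`); the quotient `gₙ / p` is smooth although
`p` may vanish somewhere, because `p ≠ 0` on the topological support `K` of `w`
(`contDiff_quot`).

Sizes are tracked by `DerivBound K L M f`: the `j`-th derivative of `f` is `≪ M L^j` on `K`.
With `L = X / Z` this is stable under products (`DerivBound.mul`), reciprocals of functions of size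
comparable to `M` (`DerivBound.inv`), and differentiation, which multiplies `M` by `L`
(`DerivBound.deriv`). Here `w` has size `1` and `p` has size `Y / Z`, so each step multiplies the
size by `(Z / Y) (X / Z) = X / Y ≤ 1 / R`. The point is that `1 / p` loses only `1 / Z ≤ X / Z` per
derivative, which is why `Y / X ≥ R` suffices instead of `Y / X² ≥ R`.
After `n ≥ A` steps, the trivial bound on the interval `[Z, 2Z]` gives `≪ Z R^{-n} ≤ Z R^{-A}`.
-/

open MeasureTheory Finset Function

noncomputable section

/-- Partial derivative in the `i`-th coordinate of a function of `d` real variables. -/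
def pd {E : Type*} [NormedAddCommGroup E] [NormedSpace ℝ E] {d : ℕ} (i : Fin d)
    (f : (Fin d → ℝ) → E) (x : Fin d → ℝ) : E :=
  deriv (fun s => f (Function.update x i s)) (x i)

/-- Iterated partial derivative `∂_{x_1}^{j_1} ⋯ ∂_{x_d}^{j_d}` with multi-index `j`. -/
def pdM {E : Type*} [NormedAddCommGroup E] [NormedSpace ℝ E] {d : ℕ} (j : Fin d → ℕ)
    (f : (Fin d → ℝ) → E) : (Fin d → ℝ) → E :=
  (List.finRange d).foldr (fun i g => (pd i)^[j i] g) f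

/-- `e(u) = e^{2πiu}`. -/
def eC (u : ℝ) : ℂ := Complex.exp (2 * (Real.pi : ℂ) * Complex.I * (u : ℂ))

/-- A family `{w_T}` of smooth functions, each supported on a product of dyadic intervals,
is `X`-inert if all naturally scaled partial derivatives are bounded by powers of `X_T`. -/
def IsInert {ι : Type*} {d : ℕ} (X : ι → ℝ) (w : ι → (Fin d → ℝ) → ℂ) : Prop :=
  (∀ T, ContDiff ℝ (⊤ : ℕ∞) (w T)) ∧
  (∀ T, ∃ Z : Fin d → ℝ, (∀ i, 0 < Z i) ∧
    ∀ x ∈ Function.support (w T), ∀ i, Z i ≤ |x i| ∧ |x i| ≤ 2 * Z i) ∧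
  (∀ j : Fin d → ℕ, ∃ C : ℝ, ∀ T x,
    (∏ i, |x i| ^ j i) * ‖pdM j (w T) x‖ ≤ C * X T ^ (∑ i, j i))

/-- One-variable version of `IsInert`. -/
def IsInert1 {ι : Type*} (X : ι → ℝ) (w : ι → ℝ → ℂ) : Prop :=
  (∀ T, ContDiff ℝ (⊤ : ℕ∞) (w T)) ∧
  (∀ T, ∃ Z : ℝ, 0 < Z ∧ ∀ x ∈ Function.support (w T), Z ≤ |x| ∧ |x| ≤ 2 * Z) ∧
  (∀ j : ℕ, ∃ C : ℝ, ∀ T x, |x| ^ j * ‖iteratedDeriv j (w T) x‖ ≤ C * X T ^ j)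

end

/-- `DerivBound K L M f`: for every `j`, the `j`-th derivative of `f T` is `≪_j M T * L T ^ j` on
`K T`, uniformly in the parameter `T`. -/
def DerivBound {ι : Type*} (K : ι → Set ℝ) (L M : ι → ℝ) (f : ι → ℝ → ℂ) : Prop :=
  ∀ j : ℕ, ∃ C : ℝ, 0 ≤ C ∧ ∀ T, ∀ t ∈ K T, ‖iteratedDeriv j (f T) t‖ ≤ C * M T * L T ^ j

namespace DerivBound

variable {ι : Type*} {K : ι → Set ℝ} {L M N : ι → ℝ} {f g : ι → ℝ → ℂ}

lemma mul (hL : ∀ T, 0 ≤ L T) (hM : ∀ T, 0 ≤ M T)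
    (hf : DerivBound K L M f) (hg : DerivBound K L N g)
    (hfs : ∀ T, ∀ t ∈ K T, ContDiffAt ℝ (⊤ : ℕ∞) (f T) t)
    (hgs : ∀ T, ∀ t ∈ K T, ContDiffAt ℝ (⊤ : ℕ∞) (g T) t) :
    DerivBound K L (fun T => M T * N T) (fun T t => f T t * g T t) := by
  intro n
  choose a ha hfa using hf
  choose b hb hgb using hg
  refine ⟨∑ i ∈ Finset.range (n + 1), (n.choose i : ℝ) * a i * b (n - i),
    Finset.sum_nonneg fun i _ =>
      mul_nonneg (mul_nonneg (Nat.cast_nonneg _) (ha i)) (hb (n - i)), ?_⟩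
  intro T t ht
  rw [iteratedDeriv_fun_mul ((hfs T t ht).of_le (by exact_mod_cast le_top))
    ((hgs T t ht).of_le (by exact_mod_cast le_top))]
  refine (norm_sum_le _ _).trans ?_
  rw [Finset.sum_mul, Finset.sum_mul]
  refine Finset.sum_le_sum fun i hi => ?_
  have hin : i ≤ n := Nat.lt_succ_iff.mp (Finset.mem_range.mp hi)
  rw [norm_mul, norm_mul, Complex.norm_natCast]
  have h1 : (n.choose i : ℝ) * ‖iteratedDeriv i (f T) t‖ * ‖iteratedDeriv (n - i) (g T) t‖
      ≤ (n.choose i : ℝ) * (a i * M T * L T ^ i) * (b (n - i) * N T * L T ^ (n - i)) := by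
    have h2 := hfa i T t ht
    have h3 := hgb (n - i) T t ht
    have h4 : 0 ≤ a i * M T * L T ^ i :=
      mul_nonneg (mul_nonneg (ha i) (hM T)) (pow_nonneg (hL T) i)
    gcongr
  refine h1.trans (le_of_eq ?_)
  rw [← pow_sub_mul_pow (L T) hin]
  ring

/-- The `n`-th derivative of `1 / f` is found by solving the Leibniz expansion of
`((1 / f) f)⁽ⁿ⁾ = 0` for its top term. -/
lemma inv {c : ℝ} (hc : 0 < c) (hL : ∀ T, 0 ≤ L T) (hM : ∀ T, 0 < M T)
    (hf : DerivBound K L M f)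
    (hfs : ∀ T, ∀ t ∈ K T, ContDiffAt ℝ (⊤ : ℕ∞) (f T) t)
    (hlow : ∀ T, ∀ t ∈ K T, c * M T ≤ ‖f T t‖) :
    DerivBound K L (fun T => (M T)⁻¹) (fun T t => (f T t)⁻¹) := by
  intro n
  have hne : ∀ T, ∀ t ∈ K T, f T t ≠ 0 := fun T t ht h0 => by
    have := hlow T t ht
    rw [h0, norm_zero] at this
    exact absurd (mul_pos hc (hM T)) this.not_gt
  choose b hb hfb using hf
  induction n using Nat.strong_induction_on with
  | _ n ih =>
  rcases Nat.eq_zero_or_pos n with rfl | hn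
  · refine ⟨c⁻¹, by positivity, fun T t ht => ?_⟩
    rw [iteratedDeriv_zero, norm_inv, pow_zero, mul_one, ← mul_inv]
    exact inv_anti₀ (mul_pos hc (hM T)) (hlow T t ht)
  choose! a ha hqa using ih
  refine ⟨(∑ i ∈ Finset.range n, (n.choose i : ℝ) * a i * b (n - i)) / c, ?_, ?_⟩
  · exact div_nonneg (Finset.sum_nonneg fun i hi => mul_nonneg
      (mul_nonneg (Nat.cast_nonneg _) (ha i (Finset.mem_range.mp hi))) (hb (n - i))) hc.le
  intro T t ht
  have hone : (fun s => (f T s)⁻¹ * f T s) =ᶠ[nhds t] fun _ => (1 : ℂ) := by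
    filter_upwards [(hfs T t ht).continuousAt.eventually_ne (hne T t ht)] with s hs
    exact inv_mul_cancel₀ hs
  have hzero := hone.iteratedDeriv_eq n
  rw [iteratedDeriv_const, if_neg hn.ne',
    iteratedDeriv_fun_mul (f := fun s => (f T s)⁻¹)
      (((hfs T t ht).inv (hne T t ht)).of_le (by exact_mod_cast le_top))
      ((hfs T t ht).of_le (by exact_mod_cast le_top)), Finset.sum_range_succ] at hzero
  simp only [Nat.choose_self, Nat.cast_one, one_mul, Nat.sub_self, iteratedDeriv_zero] at hzero
  have htop := congrArg norm (eq_neg_of_add_eq_zero_right hzero)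
  rw [norm_neg, norm_mul] at htop
  have hsum : ‖∑ i ∈ Finset.range n, (n.choose i : ℂ) * iteratedDeriv i (fun s => (f T s)⁻¹) t
      * iteratedDeriv (n - i) (f T) t‖
      ≤ (∑ i ∈ Finset.range n, (n.choose i : ℝ) * a i * b (n - i)) * L T ^ n := by
    refine (norm_sum_le _ _).trans ?_
    rw [Finset.sum_mul]
    refine Finset.sum_le_sum fun i hi => ?_
    have hin : i < n := Finset.mem_range.mp hi
    rw [norm_mul, norm_mul, Complex.norm_natCast]
    have h1 : (n.choose i : ℝ) * ‖iteratedDeriv i (fun s => (f T s)⁻¹) t‖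
        * ‖iteratedDeriv (n - i) (f T) t‖
        ≤ (n.choose i : ℝ) * (a i * (M T)⁻¹ * L T ^ i) * (b (n - i) * M T * L T ^ (n - i)) := by
      have h2 := hqa i hin T t ht
      have h3 := hfb (n - i) T t ht
      have h4 : 0 ≤ a i * (M T)⁻¹ * L T ^ i :=
        mul_nonneg (mul_nonneg (ha i hin) (inv_nonneg.mpr (hM T).le)) (pow_nonneg (hL T) i)
      gcongr
    refine h1.trans (le_of_eq ?_)
    rw [← pow_sub_mul_pow (L T) hin.le]
    have := (hM T).ne'
    field_simp
  have hcM : 0 < c * M T := mul_pos hc (hM T)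
  have hkey : ‖iteratedDeriv n (fun s => (f T s)⁻¹) t‖ * (c * M T)
      ≤ (∑ i ∈ Finset.range n, (n.choose i : ℝ) * a i * b (n - i)) * L T ^ n :=
    (mul_le_mul_of_nonneg_left (hlow T t ht) (norm_nonneg _)).trans (htop.le.trans hsum)
  refine ((le_div_iff₀ hcM).mpr hkey).trans (le_of_eq ?_)
  have := (hM T).ne'
  field_simp

lemma deriv (hf : DerivBound K L M f) :
    DerivBound K L (fun T => M T * L T) (fun T => _root_.deriv (f T)) := by
  intro n
  obtain ⟨C, hC, h⟩ := hf (n + 1)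
  refine ⟨C, hC, fun T t ht => ?_⟩
  rw [← iteratedDeriv_succ']
  refine (h T t ht).trans (le_of_eq ?_)
  ring

end DerivBound

/-- Here `g t * (p t)⁻¹` is `0` at a zero of `p`, since `g` vanishes there. -/
lemma contDiff_quot {g p : ℝ → ℂ} (hg : ContDiff ℝ (⊤ : ℕ∞) g) (hp : ContDiff ℝ (⊤ : ℕ∞) p)
    (hne : ∀ t ∈ tsupport g, p t ≠ 0) : ContDiff ℝ (⊤ : ℕ∞) (fun t => g t * (p t)⁻¹) := by
  rw [contDiff_iff_contDiffAt]
  intro t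
  by_cases ht : t ∈ tsupport g
  · exact hg.contDiffAt.mul (hp.contDiffAt.inv (hne t ht))
  · have h0 : (fun s => g s * (p s)⁻¹) =ᶠ[nhds t] fun _ => (0 : ℂ) := by
      filter_upwards [notMem_tsupport_iff_eventuallyEq.mp ht] with s hs
      rw [hs, Pi.zero_apply, zero_mul]
    exact contDiffAt_const.congr_of_eventuallyEq h0

/-- One integration by parts: `∫ g e^{iψ} = i ∫ (g / ψ')' e^{iψ}`. -/
lemma norm_integral_step {g : ℝ → ℂ} {ψ : ℝ → ℝ} (hg : ContDiff ℝ (⊤ : ℕ∞) g)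
    (hψ : ContDiff ℝ (⊤ : ℕ∞) ψ) (hgc : HasCompactSupport g)
    (hne : ∀ t ∈ tsupport g, ((deriv ψ t : ℝ) : ℂ) ≠ 0) :
    ‖∫ t : ℝ, g t * Complex.exp (Complex.I * (ψ t : ℂ))‖ =
      ‖∫ t : ℝ, deriv (fun s => g s * ((deriv ψ s : ℝ) : ℂ)⁻¹) t
        * Complex.exp (Complex.I * (ψ t : ℂ))‖ := by
  have hp : ContDiff ℝ (⊤ : ℕ∞) (fun t => ((deriv ψ t : ℝ) : ℂ)) :=
    Complex.ofRealCLM.contDiff.comp (contDiff_infty_iff_deriv.mp hψ).2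
  set u : ℝ → ℂ := fun s => g s * ((deriv ψ s : ℝ) : ℂ)⁻¹ with hu
  have hus : ContDiff ℝ (⊤ : ℕ∞) u := contDiff_quot hg hp hne
  have huc : HasCompactSupport u := hgc.mul_right
  have hdu := (contDiff_infty_iff_deriv.mp hus)
  have hec : Continuous fun t : ℝ => Complex.exp (Complex.I * (ψ t : ℂ)) := by
    have := hψ.continuous
    fun_prop
  have he : ∀ t : ℝ, HasDerivAt (fun s : ℝ => Complex.exp (Complex.I * (ψ s : ℂ)))
      (Complex.exp (Complex.I * (ψ t : ℂ)) * (Complex.I * ((deriv ψ t : ℝ) : ℂ))) t := fun t =>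
    (((contDiff_infty_iff_deriv.mp hψ).1 t).hasDerivAt.ofReal_comp.const_mul Complex.I).cexp
  have hder : ∀ t : ℝ, HasDerivAt (fun s => u s * Complex.exp (Complex.I * (ψ s : ℂ)))
      (deriv u t * Complex.exp (Complex.I * (ψ t : ℂ))
        + Complex.I * (g t * Complex.exp (Complex.I * (ψ t : ℂ)))) t := by
    intro t
    refine ((hdu.1 t).hasDerivAt.mul (he t)).congr_deriv ?_
    congr 1
    by_cases ht : t ∈ tsupport g
    · have := hne t ht
      simp only [hu]
      field_simp
    · simp [hu, image_eq_zero_of_notMem_tsupport ht]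
  have hi1 : Integrable (fun t => deriv u t * Complex.exp (Complex.I * (ψ t : ℂ))) :=
    (hdu.2.continuous.mul hec).integrable_of_hasCompactSupport huc.deriv.mul_right
  have hi2 : Integrable (fun t => g t * Complex.exp (Complex.I * (ψ t : ℂ))) :=
    (hg.continuous.mul hec).integrable_of_hasCompactSupport hgc.mul_right
  have hi3 : Integrable (fun t => u t * Complex.exp (Complex.I * (ψ t : ℂ))) :=
    (hus.continuous.mul hec).integrable_of_hasCompactSupport huc.mul_right
  have h0 := integral_eq_zero_of_hasDerivAt_of_integrable hder
    (hi1.add (hi2.const_mul Complex.I)) hi3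
  rw [integral_add hi1 (hi2.const_mul Complex.I), integral_const_mul] at h0
  rw [eq_neg_of_add_eq_zero_left h0, norm_neg, norm_mul, Complex.norm_I, one_mul]

/-- The amplitude after `n` integrations by parts against `e^{i∫p}`: `g₀ = w`,
`gₙ₊₁ = (gₙ / p)'`. -/
noncomputable def ibpAmp (w p : ℝ → ℂ) : ℕ → ℝ → ℂ
  | 0 => w
  | n + 1 => deriv (fun t => ibpAmp w p n t * (p t)⁻¹)

lemma ibpAmp_tsupport (w p : ℝ → ℂ) (n : ℕ) : tsupport (ibpAmp w p n) ⊆ tsupport w := by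
  induction n with
  | zero => exact subset_rfl
  | succ n ih => exact tsupport_deriv_subset.trans ((tsupport_mul_subset_left).trans ih)

lemma ibpAmp_contDiff {w p : ℝ → ℂ} (hw : ContDiff ℝ (⊤ : ℕ∞) w) (hp : ContDiff ℝ (⊤ : ℕ∞) p)
    (hne : ∀ t ∈ tsupport w, p t ≠ 0) (n : ℕ) : ContDiff ℝ (⊤ : ℕ∞) (ibpAmp w p n) := by
  induction n with
  | zero => exact hw
  | succ n ih =>
    exact (contDiff_infty_iff_deriv.mp
      (contDiff_quot ih hp fun t ht => hne t (ibpAmp_tsupport w p n ht))).2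

lemma norm_integral_ibpAmp {w : ℝ → ℂ} {ψ : ℝ → ℝ} (hw : ContDiff ℝ (⊤ : ℕ∞) w)
    (hψ : ContDiff ℝ (⊤ : ℕ∞) ψ) (hwc : HasCompactSupport w)
    (hne : ∀ t ∈ tsupport w, ((deriv ψ t : ℝ) : ℂ) ≠ 0) (n : ℕ) :
    ‖∫ t : ℝ, w t * Complex.exp (Complex.I * (ψ t : ℂ))‖ =
      ‖∫ t : ℝ, ibpAmp w (fun s => ((deriv ψ s : ℝ) : ℂ)) n t
        * Complex.exp (Complex.I * (ψ t : ℂ))‖ := by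
  have hp : ContDiff ℝ (⊤ : ℕ∞) (fun t => ((deriv ψ t : ℝ) : ℂ)) :=
    Complex.ofRealCLM.contDiff.comp (contDiff_infty_iff_deriv.mp hψ).2
  induction n with
  | zero => rfl
  | succ n ih =>
    have hsub := ibpAmp_tsupport w (fun s => ((deriv ψ s : ℝ) : ℂ)) n
    rw [ih, norm_integral_step (ibpAmp_contDiff hw hp hne n) hψ
      (hwc.of_isClosed_subset (isClosed_tsupport _) hsub) fun t ht => hne t (hsub ht)]
    rfl

/-- Each integration by parts multiplies the size of the amplitude by `L / P`, where `P` is the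
size of `p` and `L` the cost of a derivative. -/
lemma ibpAmp_derivBound {ι : Type*} {L P : ι → ℝ} {w p : ι → ℝ → ℂ} {c : ℝ} (hc : 0 < c)
    (hL : ∀ T, 0 ≤ L T) (hP : ∀ T, 0 < P T)
    (hws : ∀ T, ContDiff ℝ (⊤ : ℕ∞) (w T)) (hps : ∀ T, ContDiff ℝ (⊤ : ℕ∞) (p T))
    (hlow : ∀ T, ∀ t ∈ tsupport (w T), c * P T ≤ ‖p T t‖)
    (hw : DerivBound (fun T => tsupport (w T)) L (fun _ => 1) w)
    (hp : DerivBound (fun T => tsupport (w T)) L P p) (n : ℕ) :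
    DerivBound (fun T => tsupport (w T)) L (fun T => (L T / P T) ^ n)
      (fun T => ibpAmp (w T) (p T) n) := by
  have hne : ∀ T, ∀ t ∈ tsupport (w T), p T t ≠ 0 := fun T t ht =>
    norm_pos_iff.mp ((mul_pos hc (hP T)).trans_le (hlow T t ht))
  induction n with
  | zero => simpa only [pow_zero, ibpAmp] using hw
  | succ n ih =>
    have h := ((ih.mul hL (fun T => pow_nonneg (div_nonneg (hL T) (hP T).le) n)
      (hp.inv hc hL hP (fun T t _ => (hps T).contDiffAt) hlow)
      (fun T t _ => (ibpAmp_contDiff (hws T) (hps T) (hne T) n).contDiffAt)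
      (fun T t ht => (hps T).contDiffAt.inv (hne T t ht)))).deriv
    have heq : (fun T => (L T / P T) ^ (n + 1))
        = fun T => (L T / P T) ^ n * (P T)⁻¹ * L T := by
      funext T
      rw [pow_succ, div_eq_mul_inv]
      ring
    rw [heq]
    exact h

/-- All derivatives of `t ↦ (ψ' t : ℂ)` have the same size as those of the real function `ψ'`. -/
lemma norm_iteratedDeriv_ofReal_deriv {ψ : ℝ → ℝ} (hψ : ContDiff ℝ (⊤ : ℕ∞) ψ) (j : ℕ) (t : ℝ) :
    ‖iteratedDeriv j (fun s => ((deriv ψ s : ℝ) : ℂ)) t‖ = |iteratedDeriv (j + 1) ψ t| := by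
  have h := Complex.ofRealLI.norm_iteratedFDeriv_comp_left (x := t)
    (contDiff_infty_iff_deriv.mp hψ).2.contDiffAt (i := j) (by exact_mod_cast le_top)
  rw [norm_iteratedFDeriv_eq_norm_iteratedDeriv, norm_iteratedFDeriv_eq_norm_iteratedDeriv,
    ← iteratedDeriv_succ'] at h
  exact h

/-- **Non-stationary phase in one variable, weaker hypothesis `Y/X ≥ R ≥ 1`.**
If `|φ'| ≫ Y/Z` on the support of `w_T` and `Y/X ≥ R ≥ 1` (rather than `Y/X² ≥ R`), then
`I = ∫ w_T(t) e^{iφ(t)} dt ≪_A Z·R^{-A}`. -/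
theorem stmt_2
    {ι : Type*} (X Y Z R : ι → ℝ)
    (w : ι → ℝ → ℂ) (φ : ι → ℝ → ℝ)
    (hX : ∀ T, 1 ≤ X T) (hY : ∀ T, 0 < Y T) (hZ : ∀ T, 0 < Z T)
    -- `{w_T}` is an `X`-inert family, each supported on `[Z, 2Z]`
    (hw : IsInert1 X w)
    (hsupp : ∀ T, Function.support (w T) ⊆ Set.Icc (Z T) (2 * Z T))
    -- `φ` is smooth and `|φ^{(j)}(t)| ≪ Y/Z^j` for `j ≥ 1` on the support of `w_T`
    (hφsmooth : ∀ T, ContDiff ℝ (⊤ : ℕ∞) (φ T))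
    (Cφ : ℕ → ℝ)
    (hφbd : ∀ j : ℕ, 1 ≤ j → ∀ T : ι, ∀ t ∈ Function.support (w T),
      |iteratedDeriv j (φ T) t| ≤ Cφ j * Y T / Z T ^ j)
    -- `Y/X ≥ R ≥ 1` (the weaker hypothesis)
    (hR : ∀ T, 1 ≤ R T ∧ R T ≤ Y T / X T)
    -- `|φ'(t)| ≫ Y/Z` on the support of `w_T`
    (c : ℝ) (hc : 0 < c)
    (hφ' : ∀ T : ι, ∀ t ∈ Function.support (w T), c * Y T / Z T ≤ |deriv (φ T) t|) :
    ∀ A : ℝ, 0 < A → ∃ C : ℝ, ∀ T : ι,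
      ‖∫ t : ℝ, w T t * Complex.exp (Complex.I * (φ T t : ℂ))‖ ≤ C * Z T * R T ^ (-A) := by
  intro A hA
  obtain ⟨hws, -, hwb⟩ := hw
  set L : ι → ℝ := fun T => X T / Z T with hLdef
  set P : ι → ℝ := fun T => Y T / Z T with hPdef
  set p : ι → ℝ → ℂ := fun T t => ((deriv (φ T) t : ℝ) : ℂ) with hpdef
  have hL : ∀ T, 0 ≤ L T := fun T => div_nonneg (zero_le_one.trans (hX T)) (hZ T).le
  have hP : ∀ T, 0 < P T := fun T => div_pos (hY T) (hZ T)
  have hps : ∀ T, ContDiff ℝ (⊤ : ℕ∞) (p T) := fun T =>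
    Complex.ofRealCLM.contDiff.comp (contDiff_infty_iff_deriv.mp (hφsmooth T)).2
  have hsub : ∀ T, tsupport (w T) ⊆ Set.Icc (Z T) (2 * Z T) := fun T =>
    closure_minimal (hsupp T) isClosed_Icc
  -- The bounds on `φ` are given on the open set `w T ≠ 0`; they pass to its closure by continuity.
  have hlow : ∀ T, ∀ t ∈ tsupport (w T), c * P T ≤ ‖p T t‖ := by
    intro T
    refine fun t ht => closure_minimal (s := Function.support (w T))
      (t := {t | c * P T ≤ ‖p T t‖}) ?_ ?_ ht
    · intro s hs
      have := hφ' T s hs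
      simp only [Set.mem_ofPred_eq, hpdef, hPdef, Complex.norm_real, Real.norm_eq_abs]
      rwa [← mul_div_assoc]
    · exact isClosed_le continuous_const (hps T).continuous.norm
  have hφcl : ∀ j : ℕ, 1 ≤ j → ∀ T, ∀ t ∈ tsupport (w T),
      |iteratedDeriv j (φ T) t| ≤ Cφ j * Y T / Z T ^ j := by
    intro j hj T
    refine fun t ht => closure_minimal (s := Function.support (w T))
      (t := {t | |iteratedDeriv j (φ T) t| ≤ Cφ j * Y T / Z T ^ j}) (hφbd j hj T) ?_ ht
    exact isClosed_le
      ((hφsmooth T).continuous_iteratedDeriv j (by exact_mod_cast le_top)).abs continuous_const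
  have hwB : DerivBound (fun T => tsupport (w T)) L (fun _ => 1) w := by
    intro j
    obtain ⟨C, hC⟩ := hwb j
    refine ⟨|C|, abs_nonneg C, fun T t ht => ?_⟩
    have hZt : Z T ≤ |t| := (hsub T ht).1.trans (le_abs_self t)
    have hXj : 0 ≤ X T ^ j := pow_nonneg (zero_le_one.trans (hX T)) j
    have h1 : Z T ^ j * ‖iteratedDeriv j (w T) t‖ ≤ |C| * X T ^ j :=
      (mul_le_mul_of_nonneg_right (pow_le_pow_left₀ (hZ T).le hZt j) (norm_nonneg _)).trans
        ((hC T t).trans (mul_le_mul_of_nonneg_right (le_abs_self C) hXj))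
    rw [mul_one, hLdef, div_pow, ← mul_div_assoc, le_div_iff₀ (pow_pos (hZ T) j), mul_comm]
    exact h1
  have hpB : DerivBound (fun T => tsupport (w T)) L P p := by
    intro j
    refine ⟨|Cφ (j + 1)|, abs_nonneg _, fun T t ht => ?_⟩
    rw [hpdef, norm_iteratedDeriv_ofReal_deriv (hφsmooth T)]
    refine (hφcl (j + 1) (Nat.le_add_left 1 j) T t ht).trans ?_
    have hZ' := hZ T
    have hY' := hY T
    have h1 : Cφ (j + 1) * Y T / Z T ^ (j + 1)
        = Cφ (j + 1) * (Y T / Z T) * (1 / Z T) ^ j := by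
      rw [div_pow, one_pow, pow_succ]
      field_simp
    rw [h1]
    have h2 : (1 : ℝ) / Z T ≤ X T / Z T := div_le_div_of_nonneg_right (hX T) hZ'.le
    have h3 := le_abs_self (Cφ (j + 1))
    simp only [hLdef, hPdef]
    gcongr
  set n := ⌈A⌉₊ with hn
  obtain ⟨C, hC, hCb⟩ := ibpAmp_derivBound hc hL hP hws hps hlow hwB hpB n 0
  refine ⟨C, fun T => ?_⟩
  have hne : ∀ t ∈ tsupport (w T), p T t ≠ 0 := fun t ht =>
    norm_pos_iff.mp ((mul_pos hc (hP T)).trans_le (hlow T t ht))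
  have hwc : HasCompactSupport (w T) :=
    isCompact_Icc.of_isClosed_subset (isClosed_tsupport _) (hsub T)
  have hR0 : 0 < R T := zero_lt_one.trans_le (hR T).1
  have hsize : (L T / P T) ^ n ≤ R T ^ (-A) := by
    have h1 : L T / P T ≤ (R T)⁻¹ := by
      have h2 : L T / P T = (Y T / X T)⁻¹ := by
        have := (hZ T).ne'
        have := (hY T).ne'
        simp only [hLdef, hPdef]
        field_simp
      rw [h2]
      exact inv_anti₀ hR0 (hR T).2
    calc (L T / P T) ^ n ≤ (R T)⁻¹ ^ n :=
          pow_le_pow_left₀ (div_nonneg (hL T) (hP T).le) h1 n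
      _ = R T ^ (-(n : ℝ)) := by rw [Real.rpow_neg hR0.le, Real.rpow_natCast, inv_pow]
      _ ≤ R T ^ (-A) :=
          Real.rpow_le_rpow_of_exponent_le (hR T).1 (neg_le_neg (Nat.le_ceil A))
  have hnorm : ∀ t : ℝ, ‖Complex.exp (Complex.I * (φ T t : ℂ))‖ = 1 := fun t => by
    rw [mul_comm, Complex.norm_exp_ofReal_mul_I]
  have hpt : ∀ t ∈ Set.Icc (Z T) (2 * Z T),
      ‖ibpAmp (w T) (p T) n t * Complex.exp (Complex.I * (φ T t : ℂ))‖ ≤ C * R T ^ (-A) := by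
    intro t _
    rw [norm_mul, hnorm, mul_one]
    by_cases ht : t ∈ tsupport (w T)
    · have := hCb T t ht
      rw [iteratedDeriv_zero, pow_zero, mul_one] at this
      exact this.trans (mul_le_mul_of_nonneg_left hsize hC)
    · rw [image_eq_zero_of_notMem_tsupport fun h => ht (ibpAmp_tsupport _ _ n h), norm_zero]
      positivity
  rw [norm_integral_ibpAmp (hws T) (hφsmooth T) hwc hne n,
    ← setIntegral_eq_integral_of_forall_compl_eq_zero (s := Set.Icc (Z T) (2 * Z T))]
  · refine (norm_setIntegral_le_of_norm_le_const measure_Icc_lt_top hpt).trans (le_of_eq ?_)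
    rw [Real.volume_real_Icc_of_le (by linarith [hZ T])]
    ring
  · intro t ht
    rw [image_eq_zero_of_notMem_tsupport fun h => ht (hsub T (ibpAmp_tsupport _ _ n h)), zero_mul]
end

section
/- Let {w_T}_{T∈F} be an X-inert family of smooth functions on (0,∞)^d with each w_T supported on x_1 ≍ X_1 (and x_i ≍ X_i for i ≥ 2), and let ŵ_T(t_1,x_2,…,x_d) = ∫_ℝ w_T(x_1,…,x_d) e(−x_1 t_1) dx_1 denote the Fourier transform in the x_1 variable (e(x) = e^{2πix}). Let {w_{±Y_1} : Y_1 ∈ (0,∞)} be a 1-inert family of smooth functions of one variable supported on ±t_1 ≍ Y_1. Then the family {X_1^{−1}·w_{±Y_1}(t_1)·ŵ_T(t_1,x_2,…,x_d) : (T, ±Y_1) ∈ F × ±(0,∞)} is X-inert (in the variables t_1, x_2,…,x_d). -/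
/-!
Partial derivatives in `x_2, …, x_d` pass under the integral sign (`Adm.tail_mul_FT`), so they only
replace `w_T` by its own mixed derivative `h`, which has the same support. What remains is a
one-variable question in `t = t_1` for the slice `g = h(·, x')`: by Leibniz, bound
`t^b ∂_t^b ĝ(t)`. Differentiating `ĝ` multiplies `g` by `-2πis`, and multiplying by `2πit`
differentiates, so up to a unimodular constant this equals the Fourier transform of `∂_s^b (s^b g)`,
a combination of the scale-invariant derivatives `s^c g^{(c)}` with `c ≤ b`. Each of these is bounded
by inertness of `w_T`, and is supported on an interval of length `X_1`, which gives the bound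
`≪ X_1 X^b` for the transform (`fourier_bound`); the normalisation `X_1^{-1}` removes the factor
`X_1` (`pdM_bound`).
-/

open MeasureTheory Finset Function

open scoped FourierTransform

/-- The Fourier transform `ĥ(t, x')` of `h` in the first variable, as a function of all variables. -/
noncomputable def FT {m : ℕ} (h : (Fin (m + 1) → ℝ) → ℂ) (x : Fin (m + 1) → ℝ) : ℂ :=
  ∫ s : ℝ, h (Fin.cons s (fun i => x i.succ)) * eC (-(s * x 0))

/-- Smooth, compactly supported functions whose first variable lies in `[a, b]` on their
topological support, which does not grow under differentiation. -/
structure Adm {m : ℕ} (a b : ℝ) (h : (Fin (m + 1) → ℝ) → ℂ) : Prop where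
  smooth : ContDiff ℝ (⊤ : ℕ∞) h
  cpt : HasCompactSupport h
  supp : tsupport h ⊆ {x | a ≤ x 0 ∧ x 0 ≤ b}

/-- The part of `pdM j` that differentiates in the variables `x_2, …, x_d` only, for
a list `l` of such variables (all of them in the application). -/
noncomputable def pdTail {E : Type*} [NormedAddCommGroup E] [NormedSpace ℝ E] {m : ℕ} (j : Fin (m + 1) → ℕ)
    (l : List (Fin m)) (f : (Fin (m + 1) → ℝ) → E) : (Fin (m + 1) → ℝ) → E :=
  l.foldr (fun i g => (pd i.succ)^[j i.succ] g) f

lemma contDiff_eC : ContDiff ℝ (⊤ : ℕ∞) eC := by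
  unfold eC
  have : ContDiff ℝ (⊤ : ℕ∞) (fun u : ℝ => (u : ℂ)) := Complex.ofRealCLM.contDiff
  fun_prop

lemma norm_eC (u : ℝ) : ‖eC u‖ = 1 := by
  unfold eC
  rw [show 2 * (Real.pi : ℂ) * Complex.I * (u : ℂ) = ((2 * Real.pi * u : ℝ) : ℂ) * Complex.I by
    push_cast; ring]
  exact Complex.norm_exp_ofReal_mul_I _

/-! ### Partial derivatives -/

section pd
variable {E : Type*} [NormedAddCommGroup E] [NormedSpace ℝ E]

lemma pd_eq_fderiv {d : ℕ} {f : (Fin d → ℝ) → E} (hf : ContDiff ℝ (⊤ : ℕ∞) f) (i : Fin d) :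
    pd i f = fun x => fderiv ℝ f x (Pi.single i 1) := by
  funext x
  have hd : DifferentiableAt ℝ f (Function.update x i (x i)) :=
    (hf.differentiable (by simp)).differentiableAt
  have := hd.hasFDerivAt.comp_hasDerivAt (x i) (hasDerivAt_update x i (x i))
  rw [Function.update_eq_self] at this
  exact this.deriv

lemma hasDerivAt_pd {d : ℕ} {f : (Fin d → ℝ) → E} (hf : ContDiff ℝ (⊤ : ℕ∞) f) (i : Fin d)
    (x : Fin d → ℝ) (s : ℝ) :
    HasDerivAt (fun r => f (Function.update x i r)) (pd i f (Function.update x i s)) s := by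
  rw [pd_eq_fderiv hf]
  exact ((hf.differentiable (by simp)).differentiableAt.hasFDerivAt).comp_hasDerivAt s
    (hasDerivAt_update x i s)

lemma iterate_pd_update {d : ℕ} (f : (Fin d → ℝ) → E) (i : Fin d) (x : Fin d → ℝ) (n : ℕ) :
    ∀ s, ((pd i)^[n] f) (Function.update x i s) =
      iteratedDeriv n (fun r => f (Function.update x i r)) s := by
  induction n with
  | zero => intro s; simp
  | succ n ih =>
    intro s
    rw [Function.iterate_succ_apply', iteratedDeriv_succ]
    simp only [pd, Function.update_idem, Function.update_self]
    congr 1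
    funext r
    exact ih r

lemma pdM_eq {m : ℕ} (j : Fin (m + 1) → ℕ) (f : (Fin (m + 1) → ℝ) → E) :
    pdM j f = (pd 0)^[j 0] (pdTail j (List.finRange m) f) := by
  simp [pdM, pdTail, List.finRange_succ, List.foldr_map]

end pd

/-! ### Partial Fourier transforms and their derivatives in the other variables -/

section Adm
variable {m : ℕ} {a b : ℝ} {h : (Fin (m + 1) → ℝ) → ℂ}

lemma Adm.pd (H : Adm a b h) (i : Fin (m + 1)) : Adm a b (pd i h) := by
  rw [pd_eq_fderiv H.smooth]
  refine ⟨?_, H.cpt.fderiv_apply ℝ _, (tsupport_fderiv_apply_subset ℝ _).trans H.supp⟩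
  exact (H.smooth.fderiv_right (m := (⊤ : ℕ∞)) (by simp)).clm_apply contDiff_const

lemma Adm.iterate (H : Adm a b h) (i : Fin (m + 1)) (n : ℕ) : Adm a b ((_root_.pd i)^[n] h) := by
  induction n with
  | zero => exact H
  | succ n ih => rw [Function.iterate_succ_apply']; exact ih.pd i

lemma Adm.tail (H : Adm a b h) (j : Fin (m + 1) → ℕ) (l : List (Fin m)) :
    Adm a b (pdTail j l h) := by
  induction l with
  | nil => exact H
  | cons i l ih => exact ih.iterate i.succ (j i.succ)

lemma Adm.mem_of_ne (H : Adm a b h) {x : Fin (m + 1) → ℝ} (hx : h x ≠ 0) :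
    a ≤ x 0 ∧ x 0 ≤ b := H.supp (subset_tsupport h hx)

lemma contDiff_cons :
    ContDiff ℝ (⊤ : ℕ∞) (fun q : ℝ × (Fin m → ℝ) => (Fin.cons q.1 q.2 : Fin (m + 1) → ℝ)) := by
  rw [contDiff_pi]
  intro i
  refine Fin.cases ?_ (fun i => ?_) i
  · simpa using contDiff_fst
  · simp only [Fin.cons_succ]
    fun_prop

lemma Adm.slice (H : Adm a b h) (y : Fin m → ℝ) :
    ContDiff ℝ (⊤ : ℕ∞) (fun s : ℝ => h (Fin.cons s y)) :=
  H.smooth.comp (contDiff_cons.comp (contDiff_id.prodMk contDiff_const))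

/-- Reparametrising `s ↦ -s` exhibits `FT h` as the value at `0` of a convolution with the constant
function `1`, whose other factor depends smoothly on the parameter `x`. -/
lemma Adm.contDiff_FT (H : Adm a b h) : ContDiff ℝ (⊤ : ℕ∞) (FT h) := by
  let g : (Fin (m + 1) → ℝ) → ℝ → ℂ := fun x t =>
    h (Fin.cons (-t) (fun i => x i.succ)) * eC (-((-t) * x 0))
  have key := contDiffOn_convolution_right_with_param (𝕜 := ℝ) (μ := volume)
    (f := fun _ : ℝ => (1 : ℂ)) (n := ⊤) (ContinuousLinearMap.mul ℝ ℂ) (g := g)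
    (s := Set.univ) (k := Set.Icc (-b) (-a)) isOpen_univ isCompact_Icc
    (by
      intro p t _ ht
      by_contra hne
      have := H.mem_of_ne (left_ne_zero_of_mul hne)
      simp only [Fin.cons_zero] at this
      exact ht ⟨by linarith, by linarith⟩)
    (continuous_const.locallyIntegrable)
    (by
      apply ContDiff.contDiffOn
      apply ContDiff.mul
      · refine H.smooth.comp (contDiff_cons.comp (f := fun q : (Fin (m + 1) → ℝ) × ℝ =>
          (-q.2, fun i : Fin m => q.1 i.succ)) ?_)
        fun_prop
      · refine contDiff_eC.comp (f := fun q : (Fin (m + 1) → ℝ) × ℝ => -(-q.2 * q.1 0)) ?_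
        fun_prop)
  have k2 : ContDiff ℝ (⊤ : ℕ∞) (fun x : Fin (m + 1) → ℝ => (x, (0 : ℝ))) := by fun_prop
  rw [Set.univ_prod_univ, contDiffOn_univ] at key
  have k3 := key.comp k2
  convert k3 using 1
  funext x
  simp [FT, g, MeasureTheory.convolution]

/-- Differentiation under the integral sign in a variable that is not transformed. -/
lemma Adm.pd_mul_FT (H : Adm a b h) (u : ℝ → ℂ) (i : Fin m) :
    _root_.pd i.succ (fun x => u (x 0) * FT h x) =
      fun x => u (x 0) * FT (_root_.pd i.succ h) x := by
  have H' := H.pd i.succ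
  obtain ⟨C, hC⟩ := H'.cpt.exists_bound_of_continuous H'.smooth.continuous
  funext x
  set y : Fin m → ℝ := fun i => x i.succ with hy
  have cE : Continuous fun s : ℝ => eC (-(s * x 0)) :=
    contDiff_eC.continuous.comp (by fun_prop)
  have cts : ∀ {f : (Fin (m + 1) → ℝ) → ℂ}, Adm a b f → ∀ z : Fin m → ℝ,
      Continuous fun s : ℝ => f (Fin.cons s z) * eC (-(s * x 0)) :=
    fun Hf z => (Hf.slice z).continuous.mul cE
  have key := hasDerivAt_integral_of_dominated_loc_of_deriv_le (μ := volume) (s := Set.univ)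
    (x₀ := x i.succ)
    (F := fun r s => h (Fin.cons s (Function.update y i r)) * eC (-(s * x 0)))
    (F' := fun r s => _root_.pd i.succ h (Fin.cons s (Function.update y i r)) * eC (-(s * x 0)))
    (bound := (Set.Icc a b).indicator fun _ => C)
    Filter.univ_mem
    (Filter.Eventually.of_forall fun r => (cts H _).aestronglyMeasurable)
    (by
      refine (cts H _).integrable_of_hasCompactSupport
        (HasCompactSupport.intro (isCompact_Icc (a := a) (b := b)) ?_)
      intro s hs
      by_contra hne
      exact hs (by simpa using H.mem_of_ne (left_ne_zero_of_mul hne)))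
    (cts H' _).aestronglyMeasurable
    (by
      refine Filter.Eventually.of_forall fun s r _ => ?_
      rw [norm_mul, norm_eC, mul_one]
      by_cases hs : s ∈ Set.Icc a b
      · rw [Set.indicator_of_mem hs]; exact hC _
      · rw [Set.indicator_of_notMem hs, norm_le_zero_iff]
        by_contra hne
        exact hs (by simpa using H'.mem_of_ne hne))
    ((integrable_indicator_iff measurableSet_Icc).2
      (continuousOn_const.integrableOn_compact isCompact_Icc))
    (by
      refine Filter.Eventually.of_forall fun s r _ => ?_
      simp only [Fin.cons_update]
      exact (hasDerivAt_pd H.smooth i.succ _ r).mul_const _)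
  have e := (key.2.const_mul (u (x 0))).deriv
  have hyx : Function.update y i (x i.succ) = y := Function.update_eq_self i y
  rw [hyx] at e
  rw [_root_.pd, ← show _ = u (x 0) * FT (_root_.pd i.succ h) x from e]
  congr 1
  funext r
  have h0 : Function.update x i.succ r 0 = x 0 :=
    Function.update_of_ne (Fin.succ_ne_zero i).symm _ _
  have h1 : (fun k : Fin m => Function.update x i.succ r k.succ) = Function.update y i r :=
    Function.update_comp_eq_of_injective x (Fin.succ_injective m) i r
  rw [FT, h0, h1]

lemma Adm.iterate_mul_FT (H : Adm a b h) (u : ℝ → ℂ) (i : Fin m) (n : ℕ) :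
    (_root_.pd i.succ)^[n] (fun x => u (x 0) * FT h x) =
      fun x => u (x 0) * FT ((_root_.pd i.succ)^[n] h) x := by
  induction n with
  | zero => rfl
  | succ n ih =>
    rw [Function.iterate_succ_apply', ih, (H.iterate i.succ n).pd_mul_FT u i,
      Function.iterate_succ_apply']

lemma Adm.tail_mul_FT (H : Adm a b h) (u : ℝ → ℂ) (j : Fin (m + 1) → ℕ) (l : List (Fin m)) :
    pdTail j l (fun x => u (x 0) * FT h x) = fun x => u (x 0) * FT (pdTail j l h) x := by
  induction l with
  | nil => rfl
  | cons i l ih =>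
    have : pdTail j (i :: l) (fun x => u (x 0) * FT h x) =
      (_root_.pd i.succ)^[j i.succ] (pdTail j l (fun x => u (x 0) * FT h x)) := rfl
    rw [this, ih, (H.tail j l).iterate_mul_FT u i]
    rfl

end Adm

/-! ### The one-variable Fourier estimate -/

lemma fourier_eq_eC (g : ℝ → ℂ) (t : ℝ) : 𝓕 g t = ∫ s : ℝ, g s * eC (-(s * t)) := by
  rw [Real.fourier_real_eq]
  congr 1
  funext s
  rw [Circle.smul_def, Real.fourierChar_apply, smul_eq_mul, mul_comm, eC]
  congr 2
  push_cast
  ring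

lemma norm_fourier_le (g : ℝ → ℂ) (t : ℝ) : ‖𝓕 g t‖ ≤ ∫ s : ℝ, ‖g s‖ := by
  rw [fourier_eq_eC]
  refine (norm_integral_le_integral_norm _).trans (le_of_eq ?_)
  simp [norm_eC]

/-- `t^n ∂_t^n ĝ` is, up to a unimodular constant, the Fourier transform of `∂_s^n (s^n g)`, and
the latter function is controlled by the scale-invariant derivatives `s^c g^{(c)}`, `c ≤ n`. -/
lemma fourier_bound {g : ℝ → ℂ} (hg : ContDiff ℝ (⊤ : ℕ∞) g) {A : ℝ} (hA : 0 < A)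
    (hs : ∀ s, g s ≠ 0 → A ≤ s ∧ s ≤ 2 * A) (n : ℕ) (B : ℕ → ℝ)
    (hB : ∀ c ≤ n, ∀ s, |s| ^ c * ‖iteratedDeriv c g s‖ ≤ B c) (t : ℝ) :
    |t| ^ n * ‖iteratedDeriv n (fun t => ∫ s : ℝ, g s * eC (-(s * t))) t‖ ≤
      A * ∑ i ∈ Finset.range (n + 1), (n.choose i : ℝ) * (n.descFactorial i) * B (n - i) := by
  have hgc : HasCompactSupport g := HasCompactSupport.intro (isCompact_Icc (a := A) (b := 2 * A))
    fun s h => by_contra fun hne => h (hs s hne)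
  set q : ℝ → ℂ := fun s => s ^ n • g s with hq
  have hqs : ContDiff ℝ (⊤ : ℕ∞) q := (contDiff_id.pow n).smul hg
  have hq0 : ∀ s ∉ Set.Icc A (2 * A), q s = 0 := fun s h => by
    have : g s = 0 := by_contra fun hne => h (hs s hne)
    simp [hq, this]
  have hqc : HasCompactSupport q := HasCompactSupport.intro isCompact_Icc hq0
  have hqt : tsupport q ⊆ Set.Icc A (2 * A) :=
    closure_minimal (fun s hne => by_contra fun h => hne (hq0 s h)) isClosed_Icc
  have hqi : ∀ k : ℕ, Integrable (iteratedDeriv k q) := fun k => by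
    refine (hqs.continuous_iteratedDeriv k (by exact_mod_cast le_top)).integrable_of_hasCompactSupport ?_
    refine HasCompactSupport.intro (isCompact_Icc (a := A) (b := 2 * A)) fun s h => ?_
    rw [← norm_eq_zero, ← norm_iteratedFDeriv_eq_norm_iteratedDeriv, norm_eq_zero]
    by_contra hne
    exact h (hqt (support_iteratedFDeriv_subset k hne))
  have e0 : (fun t => ∫ s : ℝ, g s * eC (-(s * t))) = 𝓕 g := by
    funext t; rw [fourier_eq_eC]
  have e1 : iteratedDeriv n (𝓕 g) t = (-2 * Real.pi * Complex.I) ^ n * 𝓕 q t := by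
    rw [Real.iteratedDeriv_fourier (N := ⊤) (n := n) (f := g) ?_ le_top]
    · rw [fourier_eq_eC, fourier_eq_eC, ← integral_const_mul]
      congr 1
      funext s
      simp only [hq, smul_eq_mul, Complex.real_smul]
      push_cast
      ring
    · intro k _
      refine Continuous.integrable_of_hasCompactSupport ?_ ?_
      · exact (continuous_id.pow k).smul hg.continuous
      · exact hgc.smul_left
  have e2 : 𝓕 (iteratedDeriv n q) t = (2 * Real.pi * Complex.I * t) ^ n * 𝓕 q t := by
    rw [Real.fourier_iteratedDeriv (N := ⊤) hqs (fun k _ => hqi k) le_top]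
    simp
  have e3 : |t| ^ n * ‖iteratedDeriv n (𝓕 g) t‖ = ‖𝓕 (iteratedDeriv n q) t‖ := by
    rw [e1, e2]
    simp only [norm_mul, norm_pow, norm_neg, Complex.norm_I, Complex.norm_real, Real.norm_eq_abs]
    ring
  rw [e0, e3]
  set S := ∑ i ∈ Finset.range (n + 1), (n.choose i : ℝ) * (n.descFactorial i) * B (n - i)
  have pt : ∀ s, ‖iteratedDeriv n q s‖ ≤ (Set.Icc A (2 * A)).indicator (fun _ => S) s := by
    intro s
    by_cases h : s ∈ Set.Icc A (2 * A)
    · rw [Set.indicator_of_mem h, ← norm_iteratedFDeriv_eq_norm_iteratedDeriv]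
      have hspos : 0 < s := hA.trans_le h.1
      refine (norm_iteratedFDeriv_smul_le (N := (⊤ : ℕ∞)) (contDiff_id.pow n) hg s
        (by exact_mod_cast le_top)).trans ?_
      refine Finset.sum_le_sum fun i hi => ?_
      have hi' : i ≤ n := Nat.lt_succ_iff.1 (Finset.mem_range.1 hi)
      rw [norm_iteratedFDeriv_eq_norm_iteratedDeriv, norm_iteratedFDeriv_eq_norm_iteratedDeriv]
      have : iteratedDeriv i (fun x : ℝ => id x ^ n) s = n.descFactorial i * s ^ (n - i) :=
        iteratedDeriv_pow n i
      have h3 := hB (n - i) (Nat.sub_le _ _) s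
      rw [this, norm_mul, norm_pow, Real.norm_eq_abs s, Real.norm_natCast]
      calc _ = (n.choose i : ℝ) * (n.descFactorial i) *
            (|s| ^ (n - i) * ‖iteratedDeriv (n - i) g s‖) := by ring
        _ ≤ _ := by gcongr
    · rw [Set.indicator_of_notMem h, ← norm_iteratedFDeriv_eq_norm_iteratedDeriv]
      refine le_of_eq (norm_eq_zero.2 ?_)
      by_contra hne
      exact h (hqt (support_iteratedFDeriv_subset n hne))
  refine (norm_fourier_le _ t).trans ?_
  refine (integral_mono_of_nonneg (Filter.Eventually.of_forall fun s => norm_nonneg _)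
    ((integrable_indicator_iff measurableSet_Icc).2
      (continuousOn_const.integrableOn_compact isCompact_Icc))
    (Filter.Eventually.of_forall pt)).trans (le_of_eq ?_)
  rw [integral_indicator measurableSet_Icc, setIntegral_const, smul_eq_mul, Real.volume_real_Icc_of_le
    (by linarith)]
  ring

/-! ### The derivative estimate -/

lemma pdTail_update {E : Type*} [NormedAddCommGroup E] [NormedSpace ℝ E] {m : ℕ}
    (j : Fin (m + 1) → ℕ) (c : ℕ) (l : List (Fin m)) (f : (Fin (m + 1) → ℝ) → E) :
    pdTail (Function.update j 0 c) l f = pdTail j l f := by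
  simp [pdTail]

/-- The constant produced by the Fourier estimate for `b` derivatives in the transformed variable,
in terms of the inertness constants `Cw` of the original family. -/
noncomputable def fourierConst {m : ℕ} (Cw : (Fin (m + 1) → ℕ) → ℝ) (j : Fin (m + 1) → ℕ)
    (b : ℕ) : ℝ :=
  ∑ i ∈ Finset.range (b + 1),
    (b.choose i : ℝ) * (b.descFactorial i) * |Cw (Function.update j 0 (b - i))|

lemma fourierConst_nonneg {m : ℕ} (Cw : (Fin (m + 1) → ℕ) → ℝ) (j : Fin (m + 1) → ℕ) (b : ℕ) :
    0 ≤ fourierConst Cw j b :=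
  Finset.sum_nonneg fun _ _ => by positivity

/-- The inertness estimate for a single pair `(h, v)`. The constant depends only on `j`, `Cw`, `Cv`:
the factor `A` from the length of the support in the first variable cancels the normalisation
`A⁻¹`, and the slice derivatives of order `c ≤ j 0` cost at most `X ^ ∑ j i` because `1 ≤ X`. -/
lemma pdM_bound {m : ℕ} {A : ℝ} (hA : 0 < A) {h : (Fin (m + 1) → ℝ) → ℂ} (H : Adm A (2 * A) h)
    {X : ℝ} (hX : 1 ≤ X) {v : ℝ → ℂ} (hv : ContDiff ℝ (⊤ : ℕ∞) v)
    (Cw : (Fin (m + 1) → ℕ) → ℝ) (Cv : ℕ → ℝ)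
    (hCw : ∀ j x, (∏ i, |x i| ^ j i) * ‖pdM j h x‖ ≤ Cw j * X ^ (∑ i, j i))
    (hCv : ∀ k t, |t| ^ k * ‖iteratedDeriv k v t‖ ≤ Cv k)
    (j : Fin (m + 1) → ℕ) (x : Fin (m + 1) → ℝ) :
    (∏ i, |x i| ^ j i) * ‖pdM j (fun x => ((A⁻¹ : ℝ) * v (x 0)) * FT h x) x‖ ≤
      (∑ i ∈ Finset.range (j 0 + 1),
        ((j 0).choose i : ℝ) * |Cv i| * fourierConst Cw j (j 0 - i)) * X ^ (∑ i, j i) := by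
  set y : Fin m → ℝ := fun i => x i.succ with hy
  set h' := pdTail j (List.finRange m) h with hh'
  have H' : Adm A (2 * A) h' := H.tail j _
  set φ : ℝ → ℂ := fun t => ∫ s : ℝ, h' (Fin.cons s y) * eC (-(s * t)) with hφ
  have hFT : ∀ r, FT h' (Function.update x 0 r) = φ r := fun r => by
    simp [FT, hφ, hy]
  have hφs : ContDiff ℝ (⊤ : ℕ∞) φ := by
    have : φ = fun r => FT h' (Function.update x 0 r) := funext fun r => (hFT r).symm
    rw [this]
    exact H'.contDiff_FT.comp (contDiff_update _ x 0)
  have hpd : pdM j (fun x => ((A⁻¹ : ℝ) * v (x 0)) * FT h x) x =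
      iteratedDeriv (j 0) (fun r => ((A⁻¹ : ℝ) * v r) * φ r) (x 0) := by
    rw [pdM_eq, H.tail_mul_FT (fun t => (A⁻¹ : ℝ) * v t), ← hh']
    conv_lhs => rw [← Function.update_eq_self 0 x]
    rw [iterate_pd_update]
    simp only [hFT, Function.update_self]
  set P := ∏ i : Fin m, |y i| ^ j i.succ with hP
  set M := X ^ (∑ i, j i) with hM
  have hM0 : 0 < M := by positivity
  have hP0 : 0 ≤ P := by positivity
  rw [hpd, Fin.prod_univ_succ]
  change |x 0| ^ j 0 * P * _ ≤ _
  have hC0 : 0 ≤ ∑ i ∈ Finset.range (j 0 + 1),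
      ((j 0).choose i : ℝ) * |Cv i| * fourierConst Cw j (j 0 - i) :=
    Finset.sum_nonneg fun i _ => mul_nonneg (by positivity) (fourierConst_nonneg _ _ _)
  -- division by `P` is needed below; for `P = 0` the left-hand side vanishes
  rcases hP0.eq_or_lt with hPz | hPpos
  · rw [← hPz, mul_zero, zero_mul]
    positivity
  -- the derivatives of the slice of `h'` are mixed partial derivatives of `h`
  have hslice : ∀ c ≤ j 0, ∀ s, |s| ^ c * ‖iteratedDeriv c (fun s => h' (Fin.cons s y)) s‖ ≤
      |Cw (Function.update j 0 c)| * M / P := by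
    intro c hc s
    have h1 := hCw (Function.update j 0 c) (Fin.cons s y)
    rw [pdM_eq, pdTail_update, ← hh', Function.update_self, Fin.prod_univ_succ,
      Fin.sum_univ_succ] at h1
    have h2 := iterate_pd_update h' 0 (Fin.cons s y) c s
    simp only [Fin.update_cons_zero] at h2
    rw [h2] at h1
    simp only [Fin.cons_zero, Fin.cons_succ, Function.update_self,
      Function.update_of_ne (Fin.succ_ne_zero _)] at h1
    rw [le_div_iff₀ hPpos]
    calc _ = |s| ^ c * P * ‖iteratedDeriv c (fun s => h' (Fin.cons s y)) s‖ := by ring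
      _ ≤ _ := h1
      _ ≤ _ := by
        rw [hM, Fin.sum_univ_succ]
        gcongr
        exact le_abs_self _
  have hφb : ∀ b ≤ j 0, |x 0| ^ b * ‖iteratedDeriv b φ (x 0)‖ ≤
      A * (fourierConst Cw j b * M / P) := by
    intro b hb
    refine (fourier_bound (H'.slice y) hA (fun s hs => by simpa using H'.mem_of_ne hs) b
      (fun c => |Cw (Function.update j 0 c)| * M / P)
      (fun c hc => hslice c (hc.trans hb)) (x 0)).trans (le_of_eq ?_)
    rw [fourierConst, Finset.sum_mul, Finset.sum_div]
    congr 1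
    refine Finset.sum_congr rfl fun i _ => ?_
    ring
  have hu : ContDiff ℝ (⊤ : ℕ∞) (fun r => ((A⁻¹ : ℝ) : ℂ) * v r) := contDiff_const.mul hv
  have hub : ∀ i, |x 0| ^ i * ‖iteratedDeriv i (fun r => ((A⁻¹ : ℝ) : ℂ) * v r) (x 0)‖ ≤
      A⁻¹ * |Cv i| := by
    intro i
    rw [iteratedDeriv_const_mul_field, norm_mul, Complex.norm_real, Real.norm_of_nonneg
      (by positivity)]
    calc _ = A⁻¹ * (|x 0| ^ i * ‖iteratedDeriv i v (x 0)‖) := by ring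
      _ ≤ _ := by
        gcongr
        exact (hCv i _).trans (le_abs_self _)
  have leib := norm_iteratedFDeriv_mul_le (N := (⊤ : ℕ∞)) hu hφs (x 0) (n := j 0)
    (by exact_mod_cast le_top)
  simp only [norm_iteratedFDeriv_eq_norm_iteratedDeriv] at leib
  calc |x 0| ^ j 0 * P * ‖iteratedDeriv (j 0) (fun r => ((A⁻¹ : ℝ) * v r) * φ r) (x 0)‖
      ≤ |x 0| ^ j 0 * P * ∑ i ∈ Finset.range (j 0 + 1), ((j 0).choose i : ℝ) *
          ‖iteratedDeriv i (fun r => ((A⁻¹ : ℝ) : ℂ) * v r) (x 0)‖ *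
          ‖iteratedDeriv (j 0 - i) φ (x 0)‖ := by gcongr
    _ ≤ _ := by
      rw [Finset.mul_sum, Finset.sum_mul]
      refine Finset.sum_le_sum fun i hi => ?_
      have hi' : i ≤ j 0 := Nat.lt_succ_iff.1 (Finset.mem_range.1 hi)
      have hsplit : |x 0| ^ j 0 = |x 0| ^ i * |x 0| ^ (j 0 - i) := by
        rw [← pow_add, Nat.add_sub_cancel' hi']
      have h3 := mul_le_mul (hub i) (hφb (j 0 - i) (Nat.sub_le _ _)) (by positivity)
        (by positivity)
      rw [hsplit]
      calc _ = ((j 0).choose i : ℝ) * P *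
            (|x 0| ^ i * ‖iteratedDeriv i (fun r => ((A⁻¹ : ℝ) : ℂ) * v r) (x 0)‖ *
              (|x 0| ^ (j 0 - i) * ‖iteratedDeriv (j 0 - i) φ (x 0)‖)) := by ring
        _ ≤ ((j 0).choose i : ℝ) * P * (A⁻¹ * |Cv i| *
              (A * (fourierConst Cw j (j 0 - i) * M / P))) := by gcongr
        _ = _ := by field_simp

/-- **Proposition 2.6, first part: Fourier transforms of inert families are inert.**
Writing `d = m + 1`, the Fourier transform is taken in the first variable. -/
theorem stmt_7
    {ι κ : Type*} {m : ℕ}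
    (X X1 : ι → ℝ) (w : ι → (Fin (m + 1) → ℝ) → ℂ)
    (hX : ∀ T, 1 ≤ X T) (hX1 : ∀ T, 0 < X1 T)
    -- `{w_T}` is an `X`-inert family with `x_1` supported on `x_1 ≍ X_1`
    (hw : IsInert X w)
    (hsupp : ∀ T, ∀ x ∈ Function.support (w T), X1 T ≤ x 0 ∧ x 0 ≤ 2 * X1 T)
    -- `{w_{±Y_1}}` is a `1`-inert family of one-variable functions supported on `±t_1 ≍ Y_1`
    (Y1 : κ → ℝ) (hY1 : ∀ S, 0 < Y1 S)
    (v : κ → ℝ → ℂ) (hv : IsInert1 (fun _ : κ => (1 : ℝ)) v)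
    (hvsupp : ∀ S, ∀ t ∈ Function.support (v S), Y1 S ≤ |t| ∧ |t| ≤ 2 * Y1 S) :
    -- conclusion: `{X_1^{-1} w_{±Y_1}(t_1) ŵ_T(t_1, x_2, …, x_d)}` is an `X`-inert family
    IsInert (fun p : ι × κ => X p.1)
      (fun p x => ((X1 p.1)⁻¹ : ℝ) * v p.2 (x 0) *
        ∫ s : ℝ, w p.1 (Fin.cons s (fun i => x i.succ)) * eC (-(s * x 0))) := by
  have hAdm : ∀ T, Adm (X1 T) (2 * X1 T) (w T) := by
    intro T
    obtain ⟨Z, -, hZ⟩ := hw.2.1 T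
    refine ⟨hw.1 T, ?_, closure_minimal (hsupp T) ?_⟩
    · refine HasCompactSupport.intro
        (isCompact_Icc (a := fun i => -(2 * Z i)) (b := fun i => 2 * Z i)) fun x hx => ?_
      by_contra hne
      exact hx ⟨fun i => (abs_le.1 (hZ x hne i).2).1, fun i => (abs_le.1 (hZ x hne i).2).2⟩
    · exact (isClosed_le continuous_const (continuous_apply 0)).inter
        (isClosed_le (continuous_apply 0) continuous_const)
  refine ⟨fun p => ?_, fun p => ?_, fun j => ?_⟩
  · have hv0 : ContDiff ℝ (⊤ : ℕ∞) (fun x : Fin (m + 1) → ℝ => v p.2 (x 0)) :=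
      (hv.1 p.2).comp (contDiff_apply ℝ ℝ 0)
    exact (contDiff_const.mul hv0).mul (hAdm p.1).contDiff_FT
  · obtain ⟨Z, hZ0, hZ⟩ := hw.2.1 p.1
    refine ⟨Fin.cons (Y1 p.2) (fun i => Z i.succ), fun i => ?_, fun x hx i => ?_⟩
    · refine Fin.cases ?_ (fun i => ?_) i
      · exact hY1 _
      · exact hZ0 _
    · have hxne := Function.mem_support.1 hx
      refine Fin.cases ?_ (fun i => ?_) i
      · exact hvsupp p.2 (x 0) (right_ne_zero_of_mul (left_ne_zero_of_mul hxne))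
      · -- a nonzero integral has a point where the integrand does not vanish
        have hI := right_ne_zero_of_mul hxne
        obtain ⟨s, hs⟩ : ∃ s : ℝ,
            w p.1 (Fin.cons s (fun i => x i.succ)) * eC (-(s * x 0)) ≠ 0 := by
          by_contra! hall
          exact hI (by simp [hall])
        simpa using hZ _ (left_ne_zero_of_mul hs) i.succ
  · choose Cw hCw using hw.2.2
    choose Cv hCv using hv.2.2
    exact ⟨_, fun p x => pdM_bound (hX1 p.1) (hAdm p.1) (hX p.1) (hv.1 p.2) Cw Cv
      (fun j x => hCw j p.1 x) (fun k t => by simpa using hCv k p.2 t) j x⟩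
end
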